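/- With Ai(a;b) := q^{−v(a)/3} ∫_{t∈O} ψ(a t³ + b t) dt and v(a) < 0: if v(b) ≥ (1/3) v(a), then |Ai(a;b)| ≤ q^{1 + v(3)}. -/

import Mathlib

open MeasureTheory

/-- A measure whose outer measure is translation invariant pulls back along an additive
homomorphism to a complete translation-invariant measure, even if the range is not measurable. -/
theorem exists_complete_invariant_measure {G X : Type*} [AddCommGroup G] [AddCommGroup X]
    [MeasurableSpace X] (μ : Measure X) (hμ : ∀ (a : X) (s : Set X), μ ((a + ·) ⁻¹' s) = μ s)
    (ι : G →+ X) :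
    ∃ (_ : MeasurableSpace G) (ν : Measure G), MeasurableAdd G ∧ ν.IsAddLeftInvariant ∧
      ν.IsComplete ∧ Measurable ι ∧ ν.map ι = μ.restrict (Set.range ι) ∧
      ∀ s, ν s = μ (ι '' s) := by
  set o : OuterMeasure G := OuterMeasure.comap ι μ.toOuterMeasure with ho
  have ho_apply (s : Set G) : o s = μ (ι '' s) := rfl
  have ho_inv (g : G) (s : Set G) : o ((g + ·) ⁻¹' s) = o s := by
    rw [ho_apply, ho_apply, ← hμ (ι g) (ι '' s)]
    congr 1
    ext x
    simp only [Set.mem_image, Set.mem_preimage]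
    constructor
    · rintro ⟨y, hy, rfl⟩
      exact ⟨g + y, hy, map_add _ _ _⟩
    · rintro ⟨y, hy, h⟩
      refine ⟨y - g, by simpa using hy, ?_⟩
      rw [map_sub, h]
      abel
  have hι_meas {A : Set X} (hA : MeasurableSet A) : MeasurableSet[o.caratheodory] (ι ⁻¹' A) := by
    rw [OuterMeasure.isCaratheodory_iff]
    intro t
    simp only [ho_apply]
    rw [Set.image_inter_preimage, ← measure_inter_add_sdiff (ι '' t) hA]
    congr 2
    ext x
    simp only [Set.mem_sdiff, Set.mem_image, Set.mem_preimage]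
    grind
  let m : MeasurableSpace G := o.caratheodory
  let ν : Measure G := o.toMeasure le_rfl
  have hν (s : Set G) : ν s = μ (ι '' s) := by
    refine le_antisymm ?_ (le_toMeasure_apply o le_rfl s)
    calc ν s ≤ ν (ι ⁻¹' toMeasurable μ (ι '' s)) :=
          measure_mono (Set.image_subset_iff.mp (subset_toMeasurable _ _))
      _ = o (ι ⁻¹' toMeasurable μ (ι '' s)) :=
          toMeasure_apply o le_rfl (hι_meas (measurableSet_toMeasurable _ _))
      _ ≤ μ (toMeasurable μ (ι '' s)) := measure_mono (Set.image_preimage_subset _ _)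
      _ = μ (ι '' s) := measure_toMeasurable _
  have hadd (g : G) : Measurable (g + ·) := by
    intro s hs
    rw [OuterMeasure.isCaratheodory_iff]
    intro t
    have key := (OuterMeasure.isCaratheodory_iff o).mp hs ((-g + ·) ⁻¹' t)
    rw [ho_inv, ← ho_inv g (_ ∩ _), ← ho_inv g (_ \ _)] at key
    simpa [Set.preimage_preimage, Set.preimage_inter, Set.preimage_sdiff] using key
  refine ⟨m, ν, ⟨hadd, fun g ↦ ?_⟩, ⟨fun g ↦ ?_⟩, ⟨fun s hs ↦ ?_⟩, fun A hA ↦ hι_meas hA, ?_, hν⟩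
  · simpa only [add_comm] using hadd g
  · ext s hs
    rw [Measure.map_apply (hadd g) hs, hν, hν]
    exact ho_inv g s
  · rw [hν] at hs
    refine (OuterMeasure.isCaratheodory_iff_le o).mpr fun t ↦ ?_
    have h0 : o (t ∩ s) = 0 := measure_mono_null Set.inter_subset_right hs
    rw [h0, zero_add]
    exact measure_mono Set.sdiff_subset
  · ext A hA
    rw [Measure.map_apply (fun A hA ↦ hι_meas hA) hA, hν, Set.image_preimage_eq_inter_range,
      Measure.restrict_apply hA]

/-- A measurable subgroup of positive measure has finite index, with respect to a finite
translation-invariant measure. -/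
theorem AddSubgroup.finiteIndex_of_measure_pos {G : Type*} [AddCommGroup G] [MeasurableSpace G]
    [MeasurableAdd G] (ν : Measure G) [IsFiniteMeasure ν] [ν.IsAddLeftInvariant]
    (K : AddSubgroup G) (hK : MeasurableSet (K : Set G)) (hpos : 0 < ν K) : K.FiniteIndex := by
  have hfib (x : G ⧸ K) :
      (QuotientAddGroup.mk ⁻¹' {x} : Set G) = (-x.out + ·) ⁻¹' (K : Set G) := by
    ext y
    simp only [Set.mem_preimage, Set.mem_singleton_iff, SetLike.mem_coe]
    rw [← QuotientAddGroup.eq, QuotientAddGroup.out_eq', eq_comm]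
  have hfin := Measure.finite_const_le_meas_of_disjoint_iUnion ν hpos
    (As := fun x : G ⧸ K ↦ (QuotientAddGroup.mk ⁻¹' {x} : Set G))
    (fun x ↦ by rw [hfib]; exact measurable_const_add _ hK)
    (fun x y hxy ↦ Disjoint.preimage _ (by simpa using hxy)) (measure_ne_top _ _)
  have huniv : {x : G ⧸ K | ν K ≤ ν (QuotientAddGroup.mk ⁻¹' {x} : Set G)} = Set.univ := by
    ext x
    simp [hfib, measure_preimage_add]
  rw [huniv] at hfin
  have : Finite (G ⧸ K) := Set.finite_univ_iff.mp hfin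
  exact AddSubgroup.finiteIndex_of_finite_quotient

/-- With respect to a translation-invariant probability measure, a subgroup of positive outer
measure which is an intersection of measurable subgroups is itself measurable and of finite
index. -/
theorem AddSubgroup.measurableSet_of_separated {G : Type*} [AddCommGroup G] [MeasurableSpace G]
    [MeasurableAdd G] (ν : Measure G) [IsProbabilityMeasure ν] [ν.IsAddLeftInvariant]
    (H : AddSubgroup G) (hpos : 0 < ν H)
    (hsep : ∀ t ∉ H, ∃ K : AddSubgroup G, MeasurableSet (K : Set G) ∧ H ≤ K ∧ t ∉ K) :
    MeasurableSet (H : Set G) ∧ H.FiniteIndex := by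
  have hKfin (K : AddSubgroup G) (hK : MeasurableSet (K : Set G)) (hHK : H ≤ K) :
      K.FiniteIndex :=
    K.finiteIndex_of_measure_pos ν hK (hpos.trans_le (measure_mono hHK))
  obtain ⟨B, hB⟩ := ENNReal.exists_nat_gt (ENNReal.inv_ne_top.mpr hpos.ne')
  have hbound (K : AddSubgroup G) (hK : MeasurableSet (K : Set G)) (hHK : H ≤ K) :
      K.index ≤ B := by
    have := hKfin K hK hHK
    have h1 := K.index_mul_measure hK ν
    rw [measure_univ] at h1
    have h2 : (K.index : ENNReal) ≤ (ν H)⁻¹ := by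
      rw [ENNReal.le_inv_iff_mul_le, ← h1]
      exact mul_le_mul_right (measure_mono hHK) _
    exact_mod_cast (h2.trans hB.le)
  let S : Set ℕ := {n | ∃ K : AddSubgroup G, MeasurableSet (K : Set G) ∧ H ≤ K ∧ K.index = n}
  have hS : BddAbove S := ⟨B, by rintro n ⟨K, hK, hHK, rfl⟩; exact hbound K hK hHK⟩
  have hSne : S.Nonempty := ⟨_, ⊤, by simp, le_top, rfl⟩
  obtain ⟨K, hK, hHK, hKi⟩ := Nat.sSup_mem hSne hS
  have hmax : K = H := by
    refine le_antisymm (fun t ht ↦ ?_) hHK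
    by_contra htH
    obtain ⟨L, hL, hHL, htL⟩ := hsep t htH
    have hKL : MeasurableSet ((K ⊓ L : AddSubgroup G) : Set G) := hK.inter hL
    have hfin := hKfin _ hKL (le_inf hHK hHL)
    have hlt : K.index < (K ⊓ L).index :=
      AddSubgroup.index_strictAnti (lt_of_le_of_ne inf_le_left fun h ↦ htL (h.ge ht).2)
    have := le_csSup hS ⟨_, hKL, le_inf hHK hHL, rfl⟩
    omega
  subst hmax
  exact ⟨hK, hKfin K hK le_rfl⟩

/-- An integer-valued map on a field is a discrete valuation away from `0`. -/
structure IsDiscreteVal {F : Type*} [Field F] (v : F → ℤ) : Prop where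
  mul : ∀ x y : F, x ≠ 0 → y ≠ 0 → v (x * y) = v x + v y
  add : ∀ x y : F, x ≠ 0 → y ≠ 0 → x + y ≠ 0 → min (v x) (v y) ≤ v (x + y)

namespace IsDiscreteVal

variable {F : Type*} [Field F] {v : F → ℤ}

theorem map_one (hv : IsDiscreteVal v) : v 1 = 0 := by
  have h := hv.mul 1 1 one_ne_zero one_ne_zero
  rw [one_mul] at h
  omega

theorem map_neg (hv : IsDiscreteVal v) (x : F) : v (-x) = v x := by
  rcases eq_or_ne x 0 with rfl | hx
  · rw [neg_zero]
  have hn : (-1 : F) ≠ 0 := neg_ne_zero.mpr one_ne_zero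
  have h := hv.mul (-1) (-1) hn hn
  rw [neg_one_mul, neg_neg, hv.map_one] at h
  have h2 := hv.mul (-1) x hn hx
  rw [neg_one_mul] at h2
  omega

theorem map_inv (hv : IsDiscreteVal v) {x : F} (hx : x ≠ 0) : v x⁻¹ = -v x := by
  have h := hv.mul x x⁻¹ hx (inv_ne_zero hx)
  rw [mul_inv_cancel₀ hx, hv.map_one] at h
  omega

theorem map_div (hv : IsDiscreteVal v) {x y : F} (hx : x ≠ 0) (hy : y ≠ 0) :
    v (x / y) = v x - v y := by
  rw [div_eq_mul_inv, hv.mul _ _ hx (inv_ne_zero hy), hv.map_inv hy]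
  ring

theorem map_pow (hv : IsDiscreteVal v) {x : F} (hx : x ≠ 0) (n : ℕ) : v (x ^ n) = n * v x := by
  induction n with
  | zero => simp [hv.map_one]
  | succ n ih =>
    rw [pow_succ, hv.mul _ _ (pow_ne_zero n hx) hx, ih]
    push_cast
    ring

/-- The fractional ideal of elements of valuation at least `n`. -/
def ball (hv : IsDiscreteVal v) (n : ℤ) : AddSubgroup F where
  carrier := {x | x = 0 ∨ n ≤ v x}
  zero_mem' := Or.inl rfl
  neg_mem' := by
    rintro x (rfl | hx)
    · exact Or.inl neg_zero
    · exact Or.inr (by rwa [hv.map_neg])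
  add_mem' := by
    intro x y hx hy
    by_cases hx0 : x = 0
    · simpa [hx0] using hy
    by_cases hy0 : y = 0
    · simpa [hy0] using hx
    by_cases hxy : x + y = 0
    · exact Or.inl hxy
    · exact Or.inr ((le_min (hx.resolve_left hx0) (hy.resolve_left hy0)).trans
        (hv.add x y hx0 hy0 hxy))

/-- The additive group of the residue field. -/
abbrev ResidueGroup (hv : IsDiscreteVal v) : Type _ :=
  hv.ball 0 ⧸ (hv.ball 1).addSubgroupOf (hv.ball 0)

theorem mem_ball (hv : IsDiscreteVal v) {n : ℤ} {x : F} : x ∈ hv.ball n ↔ x = 0 ∨ n ≤ v x :=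
  Iff.rfl

theorem ball_anti (hv : IsDiscreteVal v) {m n : ℤ} (h : m ≤ n) : hv.ball n ≤ hv.ball m :=
  fun _ hx ↦ hx.imp_right h.trans

theorem mul_mem_ball (hv : IsDiscreteVal v) {m n : ℤ} {x y : F} (hx : x ∈ hv.ball m)
    (hy : y ∈ hv.ball n) : x * y ∈ hv.ball (m + n) := by
  by_cases hx0 : x = 0
  · simp [hx0]
  by_cases hy0 : y = 0
  · simp [hy0]
  refine Or.inr ?_
  rw [hv.mul _ _ hx0 hy0]
  exact add_le_add (hx.resolve_left hx0) (hy.resolve_left hy0)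

theorem self_mem_ball (hv : IsDiscreteVal v) (x : F) : x ∈ hv.ball (v x) := Or.inr le_rfl

theorem one_mem_ball (hv : IsDiscreteVal v) : (1 : F) ∈ hv.ball 0 := Or.inr hv.map_one.ge

theorem map_add_of_mem_ball (hv : IsDiscreteVal v) {x y : F} {n : ℤ} (hx : x ≠ 0) (h : v x < n)
    (hy : y ∈ hv.ball n) : x + y ≠ 0 ∧ v (x + y) = v x := by
  have hnot : x ∉ hv.ball (v x + 1) := by
    rintro (h0 | h0)
    · exact hx h0
    · omega
  have hy' : y ∈ hv.ball (v x + 1) := hv.ball_anti h hy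
  have hxy : x + y ∉ hv.ball (v x + 1) := fun hmem ↦
    hnot (by simpa using sub_mem hmem hy')
  have hle : x + y ∈ hv.ball (v x) :=
    add_mem (hv.self_mem_ball x) (hv.ball_anti h.le hy)
  have hne : x + y ≠ 0 := fun h0 ↦ hxy (Or.inl h0)
  refine ⟨hne, le_antisymm ?_ (hle.resolve_left hne)⟩
  by_contra hlt
  exact hxy (Or.inr (by omega))

end IsDiscreteVal

/-- A quasi-character of the additive group of `F` which is trivial on the valuation ring but not
on elements of valuation `-1`. -/
structure IsUnramifiedChar {F : Type*} [Field F] (v : F → ℤ) (ψ : F → ℂ) : Prop where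
  map_add : ∀ x y : F, ψ (x + y) = ψ x * ψ y
  triv : ∀ x : F, (x = 0 ∨ 0 ≤ v x) → ψ x = 1
  nontriv : ∃ x : F, x ≠ 0 ∧ v x = -1 ∧ ψ x ≠ 1

namespace IsUnramifiedChar

variable {F : Type*} [Field F] {v : F → ℤ} {ψ : F → ℂ}

theorem map_zero (hψ : IsUnramifiedChar v ψ) : ψ 0 = 1 := hψ.triv 0 (Or.inl rfl)

theorem ne_zero (hψ : IsUnramifiedChar v ψ) (x : F) : ψ x ≠ 0 := by
  intro h
  have := hψ.map_add x (-x)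
  rw [add_neg_cancel, hψ.map_zero, h, zero_mul] at this
  exact one_ne_zero this

theorem map_nsmul (hψ : IsUnramifiedChar v ψ) (n : ℕ) (x : F) : ψ (n * x) = ψ x ^ n := by
  induction n with
  | zero => simp [hψ.map_zero]
  | succ n ih => rw [Nat.cast_succ, add_mul, one_mul, hψ.map_add, ih, pow_succ]

theorem norm_eq_one (hψ : IsUnramifiedChar v ψ) (hv : IsDiscreteVal v) {N : ℕ}
    (hN0 : (N : F) ≠ 0) (hN : 1 ≤ v (N : F)) (x : F) : ‖ψ x‖ = 1 := by
  set k := (-v x).toNat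
  have hmem : (N : F) ^ k * x ∈ hv.ball 0 := by
    rcases eq_or_ne x 0 with rfl | hx
    · simp
    refine Or.inr ?_
    rw [hv.mul _ _ (pow_ne_zero _ hN0) hx, hv.map_pow hN0]
    have h1 : -v x ≤ k := Int.self_le_toNat _
    nlinarith
  have h := hψ.map_nsmul (N ^ k) x
  rw [Nat.cast_pow, hψ.triv _ hmem] at h
  have hN' : N ≠ 0 := by
    rintro rfl
    exact hN0 Nat.cast_zero
  exact Complex.norm_eq_one_of_pow_eq_one h.symm (pow_ne_zero k hN')

theorem exists_mul_ne_one (hψ : IsUnramifiedChar v ψ) (hv : IsDiscreteVal v) {t : F} {j : ℤ}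
    (ht : t ∉ hv.ball j) : ∃ c ∈ hv.ball (-j), ψ (c * t) ≠ 1 := by
  obtain ⟨x, hx0, hx, hψx⟩ := hψ.nontriv
  rw [hv.mem_ball, not_or, not_le] at ht
  refine ⟨x / t, Or.inr ?_, by rwa [div_mul_cancel₀ _ ht.1]⟩
  rw [hv.map_div hx0 ht.1]
  omega

/-- The kernel in the valuation ring of the character `t ↦ ψ (c * t)`. -/
def ker (hψ : IsUnramifiedChar v ψ) (hv : IsDiscreteVal v) (c : F) :
    AddSubgroup (hv.ball 0) where
  carrier := {t | ψ (c * t) = 1}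
  zero_mem' := by simp [hψ.map_zero]
  add_mem' {x y} hx hy := by
    simp only [Set.mem_ofPred_eq] at hx hy ⊢
    rw [AddSubgroup.coe_add, mul_add, hψ.map_add, hx, hy, one_mul]
  neg_mem' {x} hx := by
    simp only [Set.mem_ofPred_eq] at hx ⊢
    have h := hψ.map_add (c * x) (c * (-x : hv.ball 0))
    rwa [← mul_add, AddSubgroup.coe_neg, add_neg_cancel, mul_zero, hψ.map_zero, hx, one_mul,
      eq_comm] at h

/-- Orthogonality: the sum of a nontrivial character over the residue field vanishes. -/
theorem sum_out_eq_zero (hψ : IsUnramifiedChar v ψ) (hv : IsDiscreteVal v)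
    [Fintype hv.ResidueGroup] {η : F} (hη0 : η ≠ 0)
    (hη : v η = -1) :
    ∑ r : hv.ResidueGroup, ψ (η * (r.out : hv.ball 0)) = 0 := by
  obtain ⟨x, hx0, hx, hψx⟩ := hψ.nontriv
  obtain ⟨u, hu⟩ : ∃ u : hv.ball 0, η * (u : F) = x :=
    ⟨⟨x / η, Or.inr (by rw [hv.map_div hx0 hη0]; omega)⟩, mul_div_cancel₀ x hη0⟩
  have hshift (r : hv.ResidueGroup) : ψ (η * ((r + (u : hv.ResidueGroup)).out : hv.ball 0)) =
      ψ x * ψ (η * (r.out : hv.ball 0)) := by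
    have hmem : -(r.out + u) + (r + (u : hv.ResidueGroup)).out ∈
        (hv.ball 1).addSubgroupOf (hv.ball 0) := by
      rw [← QuotientAddGroup.eq, QuotientAddGroup.out_eq', QuotientAddGroup.mk_add,
        QuotientAddGroup.out_eq']
    rw [AddSubgroup.mem_addSubgroupOf] at hmem
    have hηmem : η ∈ hv.ball (-1) := Or.inr hη.ge
    have h1 := hψ.triv _ (hv.mul_mem_ball hηmem hmem)
    have h2 : η * ((r + (u : hv.ResidueGroup)).out : hv.ball 0) = x + η * (r.out : hv.ball 0) +
        η * ((-(r.out + u) + (r + (u : hv.ResidueGroup)).out : hv.ball 0) : F) := by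
      push_cast
      linear_combination hu
    rw [h2, hψ.map_add, hψ.map_add, h1, mul_one]
  have hsum := Equiv.sum_comp (Equiv.addRight (u : hv.ResidueGroup))
    fun r : hv.ResidueGroup ↦ ψ (η * (r.out : hv.ball 0))
  simp only [Equiv.coe_addRight, hshift, ← Finset.mul_sum] at hsum
  by_contra hne
  exact hψx (mul_right_cancel₀ hne (hsum.trans (one_mul _).symm))

end IsUnramifiedChar

section Airy

variable {F : Type*} [Field F] {v : F → ℤ} {ψ : F → ℂ} {a b : F}

namespace IsUnramifiedChar

variable (hv : IsDiscreteVal v) [MeasurableSpace (hv.ball 0)]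
  [MeasurableAdd (hv.ball 0)]

/-- Measurability of a cubic phase forces measurability of the linear phases obtained from it by
taking second differences. -/
theorem measurable_linear_phase (hψ : IsUnramifiedChar v ψ)
    (hf : Measurable fun t : hv.ball 0 ↦ ψ (a * (t : F) ^ 3 + b * t)) {w : F}
    (hw : w ∈ hv.ball 0) : Measurable fun t : hv.ball 0 ↦ ψ (6 * a * w * t) := by
  set f := fun t : hv.ball 0 ↦ ψ (a * (t : F) ^ 3 + b * t) with hf_def
  let s : hv.ball 0 := ⟨w, hw⟩
  let u : hv.ball 0 := ⟨1, hv.one_mem_ball⟩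
  have hfs (r : hv.ball 0) : Measurable fun t ↦ f (t + r) := hf.comp (measurable_add_const r)
  have key (t : hv.ball 0) : ψ (6 * a * w * t) =
      f (t + (s + u)) * f t / (f (t + s) * f (t + u)) * (ψ (3 * a * w * (1 + w)))⁻¹ := by
    have h1 : f (t + s) ≠ 0 := hψ.ne_zero _
    have h2 : f (t + u) ≠ 0 := hψ.ne_zero _
    have h3 := hψ.ne_zero (3 * a * w * (1 + w))
    rw [← div_eq_mul_inv, div_div, eq_div_iff (mul_ne_zero (mul_ne_zero h1 h2) h3)]
    simp only [hf_def, ← hψ.map_add]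
    congr 1
    push_cast
    ring
  simp only [key]
  exact (((hfs _).mul hf).div ((hfs _).mul (hfs _))).mul_const _

theorem measurableSet_ker (hψ : IsUnramifiedChar v ψ) (hsix : 6 * a ≠ 0)
    (hf : Measurable fun t : hv.ball 0 ↦ ψ (a * (t : F) ^ 3 + b * t)) {c : F}
    (hc : c ∈ hv.ball (v (6 * a))) : MeasurableSet (hψ.ker hv c : Set (hv.ball 0)) := by
  have hw : c / (6 * a) ∈ hv.ball 0 := by
    have h := hv.mul_mem_ball hc (Or.inr (hv.map_inv hsix).ge : (6 * a)⁻¹ ∈ hv.ball (-v (6 * a)))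
    rwa [add_neg_cancel, ← div_eq_mul_inv] at h
  have h := hψ.measurable_linear_phase hv hf hw
  rw [mul_div_cancel₀ c hsix] at h
  exact h (measurableSet_singleton 1)

variable (ν : Measure (hv.ball 0)) [IsProbabilityMeasure ν] [ν.IsAddLeftInvariant]

/-- Balls of radius up to the level of the cubic phase are measurable of finite index. -/
theorem measurableSet_ball (hψ : IsUnramifiedChar v ψ) (hsix : 6 * a ≠ 0)
    (hf : Measurable fun t : hv.ball 0 ↦ ψ (a * (t : F) ^ 3 + b * t)) {j : ℤ}
    (hj : v (6 * a) ≤ -j)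
    (hpos : 0 < ν ((hv.ball j).addSubgroupOf (hv.ball 0) : Set (hv.ball 0))) :
    MeasurableSet ((hv.ball j).addSubgroupOf (hv.ball 0) : Set (hv.ball 0)) ∧
      ((hv.ball j).addSubgroupOf (hv.ball 0)).FiniteIndex := by
  refine AddSubgroup.measurableSet_of_separated ν _ hpos fun t ht ↦ ?_
  rw [AddSubgroup.mem_addSubgroupOf] at ht
  obtain ⟨c, hc, hct⟩ := hψ.exists_mul_ne_one hv ht
  refine ⟨hψ.ker hv c, hψ.measurableSet_ker hv hsix hf (hv.ball_anti hj hc), fun x hx ↦ ?_, hct⟩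
  rw [AddSubgroup.mem_addSubgroupOf] at hx
  have h := hv.mul_mem_ball hc hx
  rw [neg_add_cancel] at h
  exact hψ.triv _ h

/-- Shells on which the phase is not stationary do not contribute to the integral. -/
theorem setIntegral_shell_eq_zero (hψ : IsUnramifiedChar v ψ) (hnorm : ∀ x, ‖ψ x‖ = 1)
    (ha0 : a ≠ 0) (h3 : (3 : F) ≠ 0) (h3v : 0 ≤ v 3) (hb : b = 0 ∨ v a ≤ 3 * v b)
    (hf : Measurable fun t : hv.ball 0 ↦ ψ (a * (t : F) ^ 3 + b * t))
    [((hv.ball 1).addSubgroupOf (hv.ball 0)).FiniteIndex] {j : ℤ} (hj0 : 0 ≤ j)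
    (hj : v a + 3 + 3 * v 3 + 3 * j ≤ 0) {S : Set (hv.ball 0)} (hS : MeasurableSet S)
    (hSmem : ∀ t : hv.ball 0, t ∈ S ↔ (t : F) ∈ hv.ball j ∧ (t : F) ∉ hv.ball (j + 1)) :
    ∫ t in S, ψ (a * (t : F) ^ 3 + b * t) ∂ν = 0 := by
  obtain ⟨x, hx0, hx, -⟩ := hψ.nontriv
  have := Fintype.ofFinite hv.ResidueGroup
  set f := fun t : hv.ball 0 ↦ ψ (a * (t : F) ^ 3 + b * t) with hf_def
  obtain ⟨k, hk⟩ : ∃ k : ℕ, (k : ℤ) = -v a - 1 - v 3 - 2 * j :=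
    ⟨(-v a - 1 - v 3 - 2 * j).toNat, Int.toNat_of_nonneg (by omega)⟩
  have hπ : (x⁻¹) ^ k ∈ hv.ball k := Or.inr (by
    rw [hv.map_pow (inv_ne_zero hx0), hv.map_inv hx0, hx]; omega)
  have hπ0 : (x⁻¹) ^ k ≠ 0 := pow_ne_zero k (inv_ne_zero hx0)
  have hπv : v ((x⁻¹) ^ k) = k := by
    rw [hv.map_pow (inv_ne_zero hx0), hv.map_inv hx0, hx]; omega
  have ham : a ∈ hv.ball (v a) := hv.self_mem_ball a
  have h3m : (3 : F) ∈ hv.ball (v 3) := hv.self_mem_ball 3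
  let s (u : hv.ball 0) : hv.ball 0 := ⟨(x⁻¹) ^ k * u, by
    have h := hv.mul_mem_ball hπ u.2
    exact hv.ball_anti (by omega) h⟩
  have hs (u : hv.ball 0) : (s u : F) ∈ hv.ball k :=
    hv.ball_anti (by omega) (hv.mul_mem_ball hπ u.2)
  have hshift (u t : hv.ball 0) (ht : t ∈ S) : f (t + s u) =
      f t * ψ ((3 * a * (t : F) ^ 2 + b) * (x⁻¹) ^ k * u) := by
    have htj := ((hSmem t).mp ht).1
    have hq : 3 * a * t * (s u * s u) ∈ hv.ball 0 :=
      hv.ball_anti (by omega) (hv.mul_mem_ball (hv.mul_mem_ball (hv.mul_mem_ball h3m ham) htj)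
        (hv.mul_mem_ball (hs u) (hs u)))
    have hc : a * (s u * s u * s u) ∈ hv.ball 0 :=
      hv.ball_anti (by omega) (hv.mul_mem_ball ham
        (hv.mul_mem_ball (hv.mul_mem_ball (hs u) (hs u)) (hs u)))
    have h := hψ.triv _ (add_mem hq hc)
    rw [← mul_one (f t * _), ← h]
    simp only [hf_def, ← hψ.map_add]
    congr 1
    have hsu : (s u : F) = (x⁻¹) ^ k * u := rfl
    rw [AddSubgroup.coe_add]
    linear_combination (3 * a * (t : F) ^ 2 + b) * hsu
  have hSshift (u : hv.ball 0) : (· + s u) ⁻¹' S = S := by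
    have hmem (i : ℤ) (hi : i ≤ k) (t : F) : t + s u ∈ hv.ball i ↔ t ∈ hv.ball i :=
      AddSubgroup.add_mem_cancel_right _ (hv.ball_anti hi (hs u))
    ext t
    rw [Set.mem_preimage, hSmem, hSmem, AddSubgroup.coe_add, hmem j (by omega),
      hmem (j + 1) (by omega)]
  have hθ (t : hv.ball 0) (ht : t ∈ S) : (3 * a * (t : F) ^ 2 + b) * (x⁻¹) ^ k ≠ 0 ∧
      v ((3 * a * (t : F) ^ 2 + b) * (x⁻¹) ^ k) = -1 := by
    obtain ⟨h1, h2⟩ := (hSmem t).mp ht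
    rw [hv.mem_ball, not_or, not_le] at h2
    have htv : v (t : F) = j := le_antisymm (by omega) (h1.resolve_left h2.1)
    have h3a : 3 * a ≠ 0 := mul_ne_zero h3 ha0
    have hq0 : 3 * a * (t : F) ^ 2 ≠ 0 := mul_ne_zero h3a (pow_ne_zero 2 h2.1)
    have hqv : v (3 * a * (t : F) ^ 2) = v 3 + v a + 2 * j := by
      rw [hv.mul _ _ h3a (pow_ne_zero 2 h2.1), hv.mul _ _ h3 ha0, hv.map_pow h2.1, htv]
      norm_num
    have hbm : b ∈ hv.ball (v 3 + v a + 2 * j + 1) := hb.imp_right fun hb ↦ by omega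
    obtain ⟨hne, hval⟩ := hv.map_add_of_mem_ball hq0 (by omega) hbm
    refine ⟨mul_ne_zero hne hπ0, ?_⟩
    rw [hv.mul _ _ hne hπ0, hval, hπv]
    omega
  have hint : Integrable f ν :=
    Integrable.of_bound hf.aestronglyMeasurable 1 (Filter.Eventually.of_forall fun t ↦ (hnorm _).le)
  have htrans (u : hv.ball 0) : ∫ t in S, f (t + s u) ∂ν = ∫ t in S, f t ∂ν := by
    rw [← integral_indicator hS, ← integral_indicator hS,
      ← integral_add_right_eq_self (S.indicator f) (s u)]
    refine integral_congr_ae (.of_forall fun t ↦ ?_)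
    have : t + s u ∈ S ↔ t ∈ S := Set.ext_iff.mp (hSshift u) t
    by_cases ht : t ∈ S <;> simp [ht, this]
  have hzero : ∑ r : hv.ResidueGroup, ∫ t in S, f (t + s r.out) ∂ν = 0 := by
    rw [← integral_finsetSum _ fun r _ ↦ ?_]
    · refine (setIntegral_congr_fun hS fun t ht ↦ ?_).trans (integral_zero _ _)
      simp only [hshift _ t ht, ← Finset.mul_sum]
      rw [hψ.sum_out_eq_zero hv (hθ t ht).1 (hθ t ht).2, mul_zero]
    · exact (hint.comp_add_right (s r.out)).integrableOn
  simp only [htrans, Finset.sum_const, nsmul_eq_mul] at hzero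
  exact (mul_eq_zero.mp hzero).resolve_left
    (by simp)

/-- The cubic exponential integral over the valuation ring is bounded by the measure of a ball of
small radius. -/
theorem exists_norm_integral_le (hψ : IsUnramifiedChar v ψ) [CharZero F] [ν.IsComplete]
    {q : ℝ} (hq : 1 < q) (hodd : v 2 = 0)
    (hball : ∀ n : ℤ, 0 ≤ n → ν ((hv.ball n).addSubgroupOf (hv.ball 0) : Set (hv.ball 0)) =
      ENNReal.ofReal (q ^ (-n)))
    (ha0 : a ≠ 0) (ha : v a < 0) (hb : b = 0 ∨ v a ≤ 3 * v b)
    (hf : AEMeasurable (fun t : hv.ball 0 ↦ ψ (a * (t : F) ^ 3 + b * t)) ν) :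
    ∃ i : ℕ, -v a - 3 * i ≤ 3 + 3 * v 3 ∧
      ‖∫ t : hv.ball 0, ψ (a * (t : F) ^ 3 + b * t) ∂ν‖ ≤ q ^ (-(i : ℤ)) := by
  replace hf := hf.nullMeasurable.measurable_of_complete
  have hq0 : 0 < q := zero_lt_one.trans hq
  have h3v : 0 ≤ v 3 := by
    have h := hv.add 1 2 one_ne_zero two_ne_zero (by norm_num)
    norm_num [hv.map_one, hodd] at h
    exact h
  have hsix : 6 * a ≠ 0 := mul_ne_zero (by norm_num) ha0
  have hsixv : v (6 * a) = v 3 + v a := by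
    rw [show 6 * a = 2 * (3 * a) by ring, hv.mul _ _ two_ne_zero (mul_ne_zero three_ne_zero ha0),
      hv.mul _ _ three_ne_zero ha0, hodd, zero_add]
  have hmeas (j : ℤ) (hj0 : 0 ≤ j) (hj : v 3 + v a + j ≤ 0) :=
    hψ.measurableSet_ball hv ν hsix hf (j := j) (by omega) (by
      rw [hball j hj0, ENNReal.ofReal_pos]
      positivity)
  have hnorm (x : F) : ‖ψ x‖ = 1 := by
    by_cases hva : v 3 + v a + 1 ≤ 0
    · have hfin := (hmeas 1 zero_le_one hva).2
      have hN := AddSubgroup.nsmul_index_mem ((hv.ball 1).addSubgroupOf (hv.ball 0))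
        ⟨1, hv.one_mem_ball⟩
      set N := ((hv.ball 1).addSubgroupOf (hv.ball 0)).index
      have hN0 : (N : F) ≠ 0 := Nat.cast_ne_zero.mpr hfin.index_ne_zero
      rw [AddSubgroup.mem_addSubgroupOf, AddSubgroup.coe_nsmul, nsmul_one] at hN
      exact hψ.norm_eq_one hv hN0 (hN.resolve_left hN0) x
    · refine hψ.norm_eq_one hv (N := 3) (by norm_num) ?_ x
      push_cast
      omega
  have hint : Integrable (fun t : hv.ball 0 ↦ ψ (a * (t : F) ^ 3 + b * t)) ν :=
    Integrable.of_bound hf.aestronglyMeasurable 1 (.of_forall fun t ↦ (hnorm _).le)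
  have hbound (i : ℕ) : ‖∫ t in ((hv.ball i).addSubgroupOf (hv.ball 0) : Set (hv.ball 0)),
      ψ (a * (t : F) ^ 3 + b * t) ∂ν‖ ≤ q ^ (-(i : ℤ)) := by
    have h := norm_setIntegral_le_of_norm_le_const (μ := ν)
      (s := ((hv.ball i).addSubgroupOf (hv.ball 0) : Set (hv.ball 0))) (C := 1)
      (f := fun t : hv.ball 0 ↦ ψ (a * (t : F) ^ 3 + b * t)) (measure_lt_top _ _)
      fun t _ ↦ (hnorm _).le
    rwa [one_mul, Measure.real, hball i (Int.natCast_nonneg i),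
      ENNReal.toReal_ofReal (by positivity)] at h
  have hreduce (i : ℕ) (hi : i = 0 ∨ v a + 3 * v 3 + 3 * i ≤ 0) :
      ∫ t in ((hv.ball i).addSubgroupOf (hv.ball 0) : Set (hv.ball 0)),
        ψ (a * (t : F) ^ 3 + b * t) ∂ν = ∫ t : hv.ball 0, ψ (a * (t : F) ^ 3 + b * t) ∂ν := by
    induction i with
    | zero => simp
    | succ i ih =>
      replace hi := hi.resolve_left (Nat.succ_ne_zero i)
      push_cast at hi ⊢
      have hfin := (hmeas 1 zero_le_one (by omega)).2
      have hm := (hmeas i (by omega) (by omega)).1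
      have hm' := (hmeas (i + 1) (by omega) (by omega)).1
      have hsub : ((hv.ball (i + 1)).addSubgroupOf (hv.ball 0) : Set (hv.ball 0)) ⊆
          (hv.ball i).addSubgroupOf (hv.ball 0) := fun t ht ↦ hv.ball_anti (by omega) ht
      have hshell := hψ.setIntegral_shell_eq_zero hv ν hnorm ha0 three_ne_zero h3v hb hf
        (j := i) (by omega) (by omega) (hm.diff hm') (fun t ↦ Iff.rfl)
      rw [setIntegral_sdiff hm' hint.integrableOn hsub, sub_eq_zero] at hshell
      rw [← hshell, ih (by omega)]
  refine ⟨((-v a - 3 * v 3) / 3).toNat, by omega, ?_⟩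
  rw [← hreduce ((-v a - 3 * v 3) / 3).toNat (by omega)]
  exact hbound _

end IsUnramifiedChar

end Airy

/-- Part (3) of the Proposition on the p-adic Airy function
`Ai(a;b) := q^{-v(a)/3} ∫_{t ∈ O} ψ(a t³ + b t) dt` (with `v(a) < 0`): if
`(1/3) v(a) ≤ v(b)` (allowing `b = 0`), then `|Ai(a;b)| ≤ q^{1 + v(3)}`. -/
theorem stmt_6 {F : Type*} [Field F] [CharZero F] [MeasurableSpace F]
    (μ : Measure F) (v : F → ℤ) (q : ℝ) (ψ : F → ℂ)
    (hq : 1 < q)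
    (hv_mul : ∀ x y : F, x ≠ 0 → y ≠ 0 → v (x * y) = v x + v y)
    (hv_add : ∀ x y : F, x ≠ 0 → y ≠ 0 → x + y ≠ 0 → min (v x) (v y) ≤ v (x + y))
    (hodd : v 2 = 0)
    (hμ : ∀ n : ℤ, μ {x : F | x = 0 ∨ n ≤ v x} = ENNReal.ofReal (q ^ (-n)))
    (hμ_inv : ∀ (a : F) (s : Set F), μ ((a + ·) ⁻¹' s) = μ s)
    (hψ_add : ∀ x y : F, ψ (x + y) = ψ x * ψ y)
    (hψ_triv : ∀ x : F, (x = 0 ∨ 0 ≤ v x) → ψ x = 1)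
    (hψ_nontriv : ∃ x : F, x ≠ 0 ∧ v x = -1 ∧ ψ x ≠ 1)
    (a b : F) (ha0 : a ≠ 0) (ha : v a < 0) (hab : b = 0 ∨ v a ≤ 3 * v b) :
    ‖((Real.rpow q (-(v a : ℝ) / 3) : ℝ) : ℂ) *
        ∫ t in {t : F | t = 0 ∨ 0 ≤ v t}, ψ (a * t ^ 3 + b * t) ∂μ‖
      ≤ Real.rpow q (1 + (v 3 : ℝ)) := by

  have hv : IsDiscreteVal v := ⟨hv_mul, hv_add⟩
  have hψ : IsUnramifiedChar v ψ := ⟨hψ_add, hψ_triv, hψ_nontriv⟩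
  have hq0 : 0 < q := zero_lt_one.trans hq
  set f : F → ℂ := fun t ↦ ψ (a * t ^ 3 + b * t)
  set O : Set F := {t : F | t = 0 ∨ 0 ≤ v t}
  by_cases hf : AEStronglyMeasurable f (μ.restrict O)
  swap
  · rw [integral_undef fun h ↦ hf h.aestronglyMeasurable, mul_zero, norm_zero]
    exact Real.rpow_nonneg hq0.le _
  obtain ⟨m, ν, hadd, hinv, hcomp, hι, hmap, hν⟩ :=
    exists_complete_invariant_measure μ hμ_inv (hv.ball 0).subtype
  have hrange : Set.range (hv.ball 0).subtype = O := by
    rw [AddSubgroup.coe_subtype, Subtype.range_coe]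
    rfl
  rw [hrange] at hmap
  have hball (n : ℤ) (hn : 0 ≤ n) :
      ν ((hv.ball n).addSubgroupOf (hv.ball 0) : Set (hv.ball 0)) = ENNReal.ofReal (q ^ (-n)) := by
    rw [hν, ← hμ n, ← AddSubgroup.coe_map, AddSubgroup.addSubgroupOf_map_subtype,
      inf_eq_left.mpr (hv.ball_anti hn)]
    rfl
  have hprob : IsProbabilityMeasure ν := ⟨by
    have h := hball 0 le_rfl
    rwa [AddSubgroup.addSubgroupOf_self, AddSubgroup.coe_top, neg_zero, zpow_zero,
      ENNReal.ofReal_one] at h⟩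
  rw [← hmap] at hf ⊢
  rw [integral_map hι.aemeasurable hf]
  obtain ⟨i, hi, hle⟩ := hψ.exists_norm_integral_le hv ν hq hodd hball ha0 ha hab
    (hf.aemeasurable.comp_measurable hι)
  simp only [Real.rpow_eq_pow]
  rw [norm_mul, Complex.norm_real, Real.norm_of_nonneg (Real.rpow_nonneg hq0.le _)]
  calc q ^ (-(v a : ℝ) / 3) * ‖∫ t : hv.ball 0, f t ∂ν‖
      ≤ q ^ (-(v a : ℝ) / 3) * q ^ (-(i : ℤ)) := by
        gcongr
    _ = q ^ (-(v a : ℝ) / 3 - i) := by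
        rw [← Real.rpow_intCast, ← Real.rpow_add hq0]
        push_cast
        ring_nf
    _ ≤ q ^ (1 + (v 3 : ℝ)) := by
        refine Real.rpow_le_rpow_of_exponent_le hq.le ?_
        have : (-v a - 3 * i : ℝ) ≤ 3 + 3 * v 3 := by exact_mod_cast hi
        linarith
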